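/- arXiv:2204.10991 — 2 statements merged into one kernel-verified Lean document; each statement's English description precedes it below -/
import Mathlib

section
/- Let 𝒜 be an L-structure and ℬ an L'-structure on the same underlying set, both locally finite, such that each of L and L' contains a binary relation symbol interpreted in the respective structure as a linear order of the domain. Suppose: (i) 𝒜 is a quantifier-free reduct of ℬ, i.e. for all same-length finite tuples ī, j̄, ī ∼_ℬ j̄ implies ī ∼_𝒜 j̄; (ii) ℬ is saturated: for every subset S of ℬ of cardinality strictly less than the cardinality of ℬ and every set p of L'-formulas in one free variable with parameters from S, if every finite subset of p is realized in ℬ then p is realized in ℬ; (iii) every quantifier-free type realized in ℬ is equivalent in ℬ to a single L'-formula, i.e. for every finite tuple b̄ from ℬ there is an L'-formula φ(x̄) such that for every tuple c̄ of the same length, ℬ ⊨ φ(c̄) if and only if c̄ ∼_ℬ b̄; (iv) ℬ has the Ramsey property (every pair of finite substructures of ℬ is a Ramsey duo for ℬ). Then 𝒜 is a semi-retract of ℬ if and only if 𝒜 has the Ramsey property (every pair of finite substructures of 𝒜 is a Ramsey duo for 𝒜). -/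
open FirstOrder FirstOrder.Language

/-- Two same-length tuples have the same quantifier-free type over ∅. -/
def SameQfType (L : FirstOrder.Language) (M : Type*) [L.Structure M] {n : ℕ}
    (x y : Fin n → M) : Prop :=
  ∀ φ : L.Formula (Fin n), φ.IsQF → (φ.Realize x ↔ φ.Realize y)

/-- A qftp-respecting injection between structures in possibly different languages. -/
def QftpRespecting (L L' : FirstOrder.Language) (M N : Type*) [L.Structure M] [L'.Structure N]
    (h : M → N) : Prop :=
  Function.Injective h ∧
    ∀ (n : ℕ) (x y : Fin n → M), SameQfType L M x y → SameQfType L' N (h ∘ x) (h ∘ y)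

/-- `(g, f)` is a semi-retraction between `M` and `N`: both maps are qftp-respecting
injections and `f ∘ g` is qftp-preserving (equivalently, an `L`-embedding of `M` into `M`). -/
def IsSemiRetraction (L L' : FirstOrder.Language) (M N : Type*)
    [L.Structure M] [L'.Structure N] (g : M → N) (f : N → M) : Prop :=
  QftpRespecting L L' M N g ∧ QftpRespecting L' L N M f ∧
    ∀ (n : ℕ) (x : Fin n → M), SameQfType L M x (f ∘ g ∘ x)

/-- `M` is locally finite: every finitely generated substructure is finite. -/
def StructLocallyFinite (L : FirstOrder.Language) (M : Type*) [L.Structure M] : Prop :=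
  ∀ S : L.Substructure M, S.FG → (S : Set M).Finite

/-- `M → (B)^A_{r,d}` for substructures. -/
def ArrowSub (L : FirstOrder.Language) (M : Type*) [L.Structure M]
    (A B : L.Substructure M) (r d : ℕ) : Prop :=
  ∀ c : L.Substructure M → Fin r, ∃ B' : L.Substructure M,
    Nonempty (B' ≃[L] B) ∧
      (c '' {A' : L.Substructure M | A' ≤ B' ∧ Nonempty (A' ≃[L] A)}).ncard ≤ d

/-- `M →ᵉ (B)^A_{r,d}` for embeddings. -/
def ArrowEmb (L : FirstOrder.Language) (M : Type*) [L.Structure M]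
    (A B : L.Substructure M) (r d : ℕ) : Prop :=
  ∀ c : (A ↪[L] M) → Fin r, ∃ h : B ↪[L] M,
    (c '' {j : A ↪[L] M | ∃ e : A ↪[L] B, j = h.comp e}).ncard ≤ d

/-- A structure is rigid if its only automorphism is the identity. -/
def IsRigidStructure (L : FirstOrder.Language) (M : Type*) [L.Structure M] : Prop :=
  ∀ σ : M ≃[L] M, ∀ x : M, σ x = x

/-!
For rigid finite substructures, copies of `A` correspond to realizations of the quantifier-free type
of a tuple generating `A`, so the Ramsey property becomes a statement about colorings of tuples.
In this form it transfers along a semi-retraction by pulling the coloring back along `f`.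

Conversely, let `𝒜` have the Ramsey property. By saturation and definability, `ℬ` has finitely many
quantifier-free `n`-types, so these types are colors: for finitely many tuples of `𝒜` one finds,
tuple by tuple, a self-embedding of `𝒜` mapping all realizations of the `L`-type of the tuple to a
single `L'`-type. Being such a map is a conjunction of `L'`-formulas in variables indexed by `ℬ`;
by saturation some `g` has this property for all tuples at once, and `(g, id)` is a semi-retraction.
-/

section QuantifierFreeTypes

variable {L : FirstOrder.Language} {M : Type*} [L.Structure M]

namespace SameQfType

variable {n : ℕ} {x y z : Fin n → M}

theorem refl (x : Fin n → M) : SameQfType L M x x := fun _ _ => Iff.rfl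

theorem symm (h : SameQfType L M x y) : SameQfType L M y x :=
  fun φ hφ => (h φ hφ).symm

theorem trans (hxy : SameQfType L M x y) (hyz : SameQfType L M y z) : SameQfType L M x z :=
  fun φ hφ => (hxy φ hφ).trans (hyz φ hφ)

theorem comp (h : SameQfType L M x y) {m : ℕ} (k : Fin m → Fin n) :
    SameQfType L M (x ∘ k) (y ∘ k) := by
  intro φ hφ
  rw [← Formula.realize_relabel, ← Formula.realize_relabel]
  exact h _ (hφ.relabel _)

theorem realize_term_eq_iff (h : SameQfType L M x y) (t₁ t₂ : L.Term (Fin n)) :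
    t₁.realize x = t₂.realize x ↔ t₁.realize y = t₂.realize y := by
  simpa using h (t₁.equal t₂) (BoundedFormula.IsAtomic.equal _ _).isQF

theorem relMap_iff (h : SameQfType L M x y) {k : ℕ} (R : L.Relations k)
    (t : Fin k → L.Term (Fin n)) :
    Structure.RelMap R (fun i => (t i).realize x) ↔
      Structure.RelMap R (fun i => (t i).realize y) := by
  simpa using h (R.formula t) (BoundedFormula.IsAtomic.rel _ _).isQF

theorem of_embeddings {N : Type*} [L.Structure N] (e e' : N ↪[L] M) (x : Fin n → N) :
    SameQfType L M (e ∘ x) (e' ∘ x) := by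
  intro φ hφ
  have realize_iff : ∀ e : N ↪[L] M, φ.Realize (e ∘ x) ↔ φ.Realize x := by
    intro e
    rw [Formula.Realize, Formula.Realize, ← hφ.realize_embedding e]
    exact iff_of_eq (congrArg _ (Subsingleton.elim _ _))
  rw [realize_iff e, realize_iff e']

end SameQfType

theorem exists_term_realize_eq_of_mem_closure_range {ι : Type*} {x : ι → M} {m : M}
    (hm : m ∈ Substructure.closure L (Set.range x)) : ∃ t : L.Term ι, t.realize x = m := by
  obtain ⟨t, rfl⟩ := Substructure.mem_closure_iff_exists_term.1 hm
  choose k hk using fun s : Set.range x => s.2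
  exact ⟨t.relabel k, by rw [Term.realize_relabel]; exact congrArg t.realize (funext hk)⟩

theorem SameQfType.exists_embedding_closure {n : ℕ} {x y : Fin n → M} (h : SameQfType L M x y) :
    ∃ e : Substructure.closure L (Set.range x) ↪[L] M,
      ∀ (t : L.Term (Fin n)) (m : Substructure.closure L (Set.range x)),
        t.realize x = m → e m = t.realize y := by
  choose T hT using fun m : Substructure.closure L (Set.range x) =>
    exists_term_realize_eq_of_mem_closure_range m.2
  have realize_eq : ∀ (t : L.Term (Fin n)) (m : Substructure.closure L (Set.range x)),
      t.realize x = m → (T m).realize y = t.realize y := fun t m ht =>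
    (h.realize_term_eq_iff _ _).1 ((hT m).trans ht.symm)
  refine ⟨⟨⟨fun m => (T m).realize y, fun m m' hm => ?_⟩, fun f z => ?_, fun R z => ?_⟩,
    realize_eq⟩
  · exact Subtype.ext ((hT m).symm.trans (((h.realize_term_eq_iff _ _).2 hm).trans (hT m')))
  · refine realize_eq (Term.func f fun i => T (z i)) _ ?_
    simp only [Term.realize_func, hT]
    rfl
  · refine (h.relMap_iff R fun i => T (z i)).symm.trans ?_
    simp only [hT]
    rfl

theorem SameQfType.exists_equiv_closure {n : ℕ} {x y : Fin n → M} (h : SameQfType L M x y) :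
    ∃ e : Substructure.closure L (Set.range x) ≃[L] Substructure.closure L (Set.range y),
      ∀ i, (e ⟨x i, Substructure.subset_closure (Set.mem_range_self i)⟩ : M) = y i := by
  obtain ⟨e, he⟩ := h.exists_embedding_closure
  have map_generator (i : Fin n) :
      e ⟨x i, Substructure.subset_closure (Set.mem_range_self i)⟩ = y i := he (Term.var i) _ rfl
  have hrange : Substructure.closure L (Set.range y) = e.toHom.range := by
    refine Substructure.closure_eq_of_le ?_ ?_
    · rintro _ ⟨i, rfl⟩
      exact ⟨_, map_generator i⟩
    · rintro _ ⟨m, rfl⟩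
      obtain ⟨t, ht⟩ := exists_term_realize_eq_of_mem_closure_range m.2
      rw [Embedding.coe_toHom, he t m ht]
      exact t.realize_mem _ fun i => Substructure.subset_closure (Set.mem_range_self i)
  rw [hrange]
  exact ⟨e.equivRange, map_generator⟩

/-- The map `h` preserves the quantifier-free types of finite tuples from `B`. It is a total map
only for convenience: its values outside `B` are irrelevant. -/
def QfPreservingOn (L : FirstOrder.Language) {M : Type*} [L.Structure M] (B : Set M)
    (h : M → M) : Prop :=
  ∀ (n : ℕ) (x : Fin n → M), (∀ i, x i ∈ B) → SameQfType L M x (h ∘ x)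

namespace QfPreservingOn

variable {B C : Set M} {g h : M → M}

theorem mono (hh : QfPreservingOn L C h) (hBC : B ⊆ C) : QfPreservingOn L B h :=
  fun n x hx => hh n x fun i => hBC (hx i)

theorem comp (hg : QfPreservingOn L C g) (hh : QfPreservingOn L B h) (hBC : Set.MapsTo h B C) :
    QfPreservingOn L B (g ∘ h) :=
  fun n x hx => (hh n x hx).trans (hg n (h ∘ x) fun i => hBC (hx i))

theorem injOn (hh : QfPreservingOn L B h) : Set.InjOn h B := by
  intro m hm m' hm' heq
  have := (hh 2 ![m, m'] (by simp [Fin.forall_fin_two, hm, hm'])).realize_term_eq_iff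
    (Term.var 0) (Term.var 1)
  simpa using this.2 (by simpa using heq)

theorem exists_embedding {S : L.Substructure M} (hh : QfPreservingOn L (S : Set M) h) :
    ∃ e : S ↪[L] M, ∀ m : S, e m = h m := by
  refine ⟨⟨⟨fun m => h m, hh.injOn.injective⟩, fun {k} f z => ?_, fun {k} R z => ?_⟩, fun _ => rfl⟩
  · have := (hh (k + 1) (Fin.cons (Structure.funMap f z : S) fun i => (z i : M))
      (by simp [Fin.forall_fin_succ])).realize_term_eq_iff
        (Term.var 0) (Term.func f fun i => Term.var i.succ)
    exact this.1 rfl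
  · exact ((hh k (fun i => (z i : M)) fun i => (z i).2).relMap_iff R fun i => Term.var i).symm

end QfPreservingOn

theorem exists_qfPreservingOn_of_embedding {S : L.Substructure M} (j : S ↪[L] M) :
    ∃ h : M → M, QfPreservingOn L (S : Set M) h ∧ ∀ m : S, h m = j m := by
  have extend_apply : ∀ m : S, Function.extend Subtype.val j id (m : M) = j m :=
    Subtype.val_injective.extend_apply j id
  refine ⟨Function.extend Subtype.val j id, fun n x hx => ?_, extend_apply⟩
  lift x to Fin n → S using hx
  have : Function.extend Subtype.val j id ∘ (fun i => (x i : M)) = j ∘ x :=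
    funext fun i => extend_apply (x i)
  rw [this]
  exact SameQfType.of_embeddings S.subtype j x

end QuantifierFreeTypes

section Ramsey

variable {L : FirstOrder.Language} {M : Type*} [L.Structure M]

/-- Every pair of finite substructures of `M` is a Ramsey duo for `M`. -/
def RamseyProperty (L : FirstOrder.Language) (M : Type*) [L.Structure M] : Prop :=
  ∀ A B : L.Substructure M, (A : Set M).Finite → (B : Set M).Finite → ∀ r : ℕ, 2 ≤ r →
    ArrowSub L M A B r 1

/-- The Ramsey property for colorings of tuples: every finite set `B` has a copy `h '' B` on which
the realizations of the quantifier-free type of `a` coming from `B` have the same color. -/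
def TupleRamsey (L : FirstOrder.Language) (M : Type*) [L.Structure M] : Prop :=
  ∀ (n : ℕ) (a : Fin n → M) (B : Set M), B.Finite → ∀ (r : ℕ) (c : (Fin n → M) → Fin r),
    ∃ h : M → M, QfPreservingOn L B h ∧
      ∀ x y : Fin n → M, (∀ i, x i ∈ B) → (∀ i, y i ∈ B) →
        SameQfType L M x a → SameQfType L M y a → c (h ∘ x) = c (h ∘ y)

theorem isRigidStructure_of_isLinearOrder [Finite M] {R : L.Relations 2}
    (hR : IsLinearOrder M fun x y => Structure.RelMap R ![x, y]) : IsRigidStructure L M := by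
  classical
  let : LinearOrder M :=
    { le := fun x y => Structure.RelMap R ![x, y]
      le_refl := hR.refl
      le_trans := hR.trans
      le_antisymm := hR.antisymm
      le_total := hR.total
      toDecidableLE := Classical.decRel _ }
  intro σ x
  have map_le_iff : ∀ {x y : M}, σ x ≤ σ y ↔ x ≤ y := by
    intro x y
    have := StrongHomClass.map_rel σ R ![x, y]
    rwa [show σ ∘ ![x, y] = ![σ x, σ y] by ext i; fin_cases i <;> rfl] at this
  have : (⟨σ.toEquiv, map_le_iff⟩ : M ≃o M) = OrderIso.refl M := Subsingleton.elim _ _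
  exact DFunLike.congr_fun this x

theorem isLinearOrder_relMap_substructure {R : L.Relations 2}
    (hR : IsLinearOrder M fun x y => Structure.RelMap R ![x, y]) (S : L.Substructure M) :
    IsLinearOrder S fun x y => Structure.RelMap R ![x, y] := by
  have relMap_coe_iff : ∀ x y : S,
      Structure.RelMap R ![x, y] ↔ Structure.RelMap R ![(x : M), (y : M)] := by
    intro x y
    rw [← S.subtype.map_rel, show S.subtype ∘ ![x, y] = ![(x : M), (y : M)] by
      ext i; fin_cases i <;> rfl]
  simp only [relMap_coe_iff]
  exact
    { refl := fun x => hR.refl x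
      trans := fun x y z => hR.trans x y z
      antisymm := fun x y hxy hyx => Subtype.ext (hR.antisymm x y hxy hyx)
      total := fun x y => hR.total x y }

theorem isRigidStructure_substructure_of_isLinearOrder
    (hord : ∃ R : L.Relations 2, IsLinearOrder M fun x y => Structure.RelMap R ![x, y])
    (A : L.Substructure M) (hA : (A : Set M).Finite) : IsRigidStructure L A := by
  obtain ⟨R, hR⟩ := hord
  have : Finite A := hA
  exact isRigidStructure_of_isLinearOrder (isLinearOrder_relMap_substructure hR A)

theorem IsRigidStructure.equiv_apply_eq {A A' : Type*} [L.Structure A] [L.Structure A']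
    (hA : IsRigidStructure L A) (e e' : A ≃[L] A') (m : A) : e m = e' m := by
  have := hA (e'.symm.comp e) m
  rwa [Language.Equiv.comp_apply, ← e'.injective.eq_iff, Language.Equiv.apply_symm_apply] at this

theorem IsRigidStructure.exists_coloring_copies {A : Type*} [L.Structure A]
    (hA : IsRigidStructure L A) {ι κ : Type*} [Nonempty κ] (a : ι → A) (c : (ι → M) → κ) :
    ∃ c' : L.Substructure M → κ, ∀ (A' : L.Substructure M) (e : A ≃[L] A'),
      c' A' = c fun i => e (a i) := by
  have (A' : L.Substructure M) : ∃ k, ∀ e : A ≃[L] A', k = c fun i => e (a i) := by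
    rcases isEmpty_or_nonempty (A ≃[L] A') with h | ⟨⟨e⟩⟩
    · exact ⟨Classical.arbitrary κ, h.elim⟩
    · exact ⟨_, fun e' => congrArg c (funext fun i => congrArg _ (hA.equiv_apply_eq e e' (a i)))⟩
  choose c' hc' using this
  exact ⟨c', hc'⟩

theorem RamseyProperty.tupleRamsey (hRP : RamseyProperty L M) (hlf : StructLocallyFinite L M)
    (hrig : ∀ A : L.Substructure M, (A : Set M).Finite → IsRigidStructure L A) :
    TupleRamsey L M := by
  intro n a B hB r c
  have hA₀ := hlf _ (Substructure.fg_closure (L := L) (Set.finite_range a))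
  -- `RamseyProperty` needs at least two colors, hence `castAdd 2`.
  obtain ⟨c', hc'⟩ := (hrig _ hA₀).exists_coloring_copies
    (fun i => ⟨a i, Substructure.subset_closure (Set.mem_range_self i)⟩)
    fun x => (c x).castAdd 2
  obtain ⟨B', ⟨e⟩, hcard⟩ := hRP _ _ hA₀ (hlf _ (Substructure.fg_closure hB)) (r + 2)
    (Nat.le_add_left 2 r) c'
  obtain ⟨h, hpres, hh⟩ :=
    exists_qfPreservingOn_of_embedding (B'.subtype.comp e.symm.toEmbedding)
  have hmem : ∀ m ∈ B, h m ∈ B' := fun m hm => by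
    rw [hh ⟨m, Substructure.subset_closure hm⟩]
    exact Subtype.coe_prop _
  replace hpres : QfPreservingOn L B h := hpres.mono Substructure.subset_closure
  refine ⟨h, hpres, ?_⟩
  have color_mem : ∀ x : Fin n → M, (∀ i, x i ∈ B) → SameQfType L M x a →
      (c (h ∘ x)).castAdd 2 ∈ c' '' {A' : L.Substructure M |
        A' ≤ B' ∧ Nonempty (A' ≃[L] Substructure.closure L (Set.range a))} := by
    intro x hx hxa
    obtain ⟨e', he'⟩ := (hxa.symm.trans (hpres n x hx)).exists_equiv_closure
    refine ⟨Substructure.closure L (Set.range (h ∘ x)),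
      ⟨Substructure.closure_le.2 (Set.range_subset_iff.2 fun i => hmem _ (hx i)), ⟨e'.symm⟩⟩, ?_⟩
    rw [hc' _ e']
    exact congrArg (fun y => (c y).castAdd 2) (funext he')
  intro x y hx hy hxa hya
  exact Fin.castAdd_injective r 2
    ((Set.ncard_le_one (Set.toFinite _)).1 hcard _ (color_mem x hx hxa) _ (color_mem y hy hya))

theorem TupleRamsey.ramseyProperty (hRP : TupleRamsey L M) : RamseyProperty L M := by
  intro A B hA hB r _ c
  have : Finite A := hA
  obtain ⟨n, ⟨E⟩⟩ := Finite.exists_equiv_fin A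
  obtain ⟨h, hpres, hh⟩ := hRP n (fun i => E.symm i) B hB r
    fun x => c (Substructure.closure L (Set.range x))
  obtain ⟨j, hj⟩ := hpres.exists_embedding
  refine ⟨j.toHom.range, ⟨j.equivRange.symm⟩, ?_⟩
  have exists_enumeration : ∀ A' : L.Substructure M, A' ≤ j.toHom.range → Nonempty (A' ≃[L] A) →
      ∃ x : Fin n → M, (∀ i, x i ∈ B) ∧ SameQfType L M x (fun i => E.symm i) ∧
        Substructure.closure L (Set.range (h ∘ x)) = A' := by
    rintro A' hA' ⟨e⟩
    choose x hx using fun i => hA' (e.symm (E.symm i)).2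
    have hhx : h ∘ (fun i => (x i : M)) = fun i => (e.symm (E.symm i) : M) :=
      funext fun i => (hj (x i)).symm.trans (hx i)
    refine ⟨fun i => x i, fun i => (x i).2, ?_, ?_⟩
    · refine (hpres n _ fun i => (x i).2).trans ?_
      rw [hhx]
      exact SameQfType.of_embeddings (A'.subtype.comp e.symm.toEmbedding) A.subtype E.symm
    · have : Set.range (fun i => (e.symm (E.symm i) : M)) = A' := by
        refine (Set.range_subset_iff.2 fun i => Subtype.coe_prop _).antisymm fun m hm => ?_
        exact ⟨E (e ⟨m, hm⟩), by simp⟩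
      rw [hhx, this, Substructure.closure_eq]
  rw [Set.ncard_le_one (Set.toFinite _)]
  rintro _ ⟨A₁, ⟨hA₁, he₁⟩, rfl⟩ _ ⟨A₂, ⟨hA₂, he₂⟩, rfl⟩
  obtain ⟨x, hx, hxa, rfl⟩ := exists_enumeration A₁ hA₁ he₁
  obtain ⟨y, hy, hya, rfl⟩ := exists_enumeration A₂ hA₂ he₂
  exact hh x y hx hy hxa hya

theorem TupleRamsey.of_isSemiRetraction {L' : FirstOrder.Language} {N : Type*} [L'.Structure N]
    {g : M → N} {f : N → M} (hgf : IsSemiRetraction L L' M N g f) (hRP : TupleRamsey L' N) :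
    TupleRamsey L M := by
  obtain ⟨⟨-, hg⟩, ⟨-, hf⟩, hfg⟩ := hgf
  intro n a B hB r c
  obtain ⟨h, hpres, hhom⟩ := hRP n (g ∘ a) (g '' B) (hB.image g) r fun y => c (f ∘ y)
  have image_mem : ∀ {k : ℕ} {x : Fin k → M}, (∀ i, x i ∈ B) → ∀ i, (g ∘ x) i ∈ g '' B :=
    fun hx i => Set.mem_image_of_mem g (hx i)
  refine ⟨f ∘ h ∘ g, fun k x hx => ?_, fun x y hx hy hxa hya => ?_⟩
  · exact (hfg k x).trans (hf k _ _ (hpres k (g ∘ x) (image_mem hx)))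
  · exact hhom _ _ (image_mem hx) (image_mem hy) (hg n _ _ hxa) (hg n _ _ hya)

end Ramsey

section CompleteTypes

variable {L : FirstOrder.Language} {M N : Type*} [L.Structure M] [L.Structure N] {α : Type*}

/-- The families `v` from `M` and `w` from `N` have the same complete type over `∅`. -/
def SameType (L : FirstOrder.Language) {M N : Type*} [L.Structure M] [L.Structure N] {α : Type*}
    (v : α → M) (w : α → N) : Prop :=
  ∀ φ : L.Formula α, φ.Realize v ↔ φ.Realize w

namespace SameType

variable {v : α → M} {w : α → N}

theorem of_imp (h : ∀ φ : L.Formula α, φ.Realize v → φ.Realize w) : SameType L v w :=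
  fun φ => ⟨h φ, fun hw => by_contra fun hv => Formula.realize_not.1 (h φ.not hv) hw⟩

theorem comp (h : SameType L v w) {β : Type*} (a : β → α) : SameType L (v ∘ a) (w ∘ a) := by
  intro φ
  rw [← Formula.realize_relabel, ← Formula.realize_relabel]
  exact h _

theorem of_forall_finset
    (h : ∀ F : Finset α, SameType L (fun k : F => v k) (fun k : F => w k)) : SameType L v w := by
  classical
  intro φ
  have hv : Formula.Realize (φ.restrictFreeVar id) (fun k => v k) ↔ φ.Realize v :=
    BoundedFormula.realize_restrictFreeVar v fun _ => rfl
  have hw : Formula.Realize (φ.restrictFreeVar id) (fun k => w k) ↔ φ.Realize w :=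
    BoundedFormula.realize_restrictFreeVar w fun _ => rfl
  rw [← hv, ← hw]
  exact h φ.freeVarFinset _

theorem of_isEmpty [IsEmpty α] (hMN : M ≅[L] N) : SameType L v w := by
  intro φ
  have := elementarilyEquivalent_iff.1 hMN (φ.relabel isEmptyElim)
  rwa [Sentence.Realize, Sentence.Realize, Formula.realize_relabel, Formula.realize_relabel,
    Subsingleton.elim (_ ∘ _) v, Subsingleton.elim (_ ∘ _) w] at this

theorem of_forall_Iic [Preorder α] [IsDirectedOrder α] (hMN : M ≅[L] N)
    (h : ∀ i : α, SameType L (fun k : Set.Iic i => v k) (fun k : Set.Iic i => w k)) :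
    SameType L v w := by
  cases isEmpty_or_nonempty α
  · exact of_isEmpty hMN
  refine of_forall_finset fun F => ?_
  obtain ⟨i, hi⟩ := F.exists_le
  exact (h i).comp fun k : F => (⟨k, hi k k.2⟩ : Set.Iic i)

theorem of_sumElim_Iio [PartialOrder α] {i : α}
    (h : SameType L (v ∘ Sum.elim ((↑) : Set.Iio i → α) fun _ : Fin 1 => i)
      (w ∘ Sum.elim ((↑) : Set.Iio i → α) fun _ => i)) :
    SameType L (fun k : Set.Iic i => v k) (fun k : Set.Iic i => w k) := by
  classical
  let split (k : Set.Iic i) : Set.Iio i ⊕ Fin 1 :=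
    if hk : (k : α) < i then Sum.inl ⟨k, hk⟩ else Sum.inr 0
  have elim_comp_split :
      (Sum.elim ((↑) : Set.Iio i → α) fun _ => i) ∘ split = ((↑) : Set.Iic i → α) := by
    funext k
    rcases (Set.mem_Iic.1 k.2).lt_or_eq with hk | hk <;> simp [split, hk]
  have := h.comp split
  rwa [Function.comp_assoc, Function.comp_assoc, elim_comp_split] at this

end SameType

end CompleteTypes

section Saturation

variable {L : FirstOrder.Language} {M : Type*} [L.Structure M]

/-- `M` is saturated: every finitely satisfiable set of formulas in one free variable over fewer
than `#M` parameters is realized. Parameters are encoded as additional free variables. -/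
def IsSaturatedStructure (L : FirstOrder.Language) (M : Type*) [L.Structure M] : Prop :=
  ∀ S : Set M, Cardinal.mk S < Cardinal.mk M →
    ∀ p : Set (L.Formula (S ⊕ Fin 1)),
      (∀ p₀ : Finset (L.Formula (S ⊕ Fin 1)), ↑p₀ ⊆ p →
        ∃ b : M, ∀ φ ∈ p₀, Formula.Realize φ (Sum.elim (fun s => (s : M)) fun _ => b)) →
      ∃ b : M, ∀ φ ∈ p, Formula.Realize φ (Sum.elim (fun s => (s : M)) fun _ => b)

namespace IsSaturatedStructure

theorem exists_realize_of_family (hsat : IsSaturatedStructure L M) {α : Type*} {w : α → M}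
    (hcard : Cardinal.mk (Set.range w) < Cardinal.mk M) (p : Set (L.Formula (α ⊕ Fin 1)))
    (hp : ∀ q : Finset (L.Formula (α ⊕ Fin 1)), ↑q ⊆ p →
      ∃ b : M, ∀ φ ∈ q, φ.Realize (Sum.elim w fun _ => b)) :
    ∃ b : M, ∀ φ ∈ p, φ.Realize (Sum.elim w fun _ => b) := by
  classical
  let toRange : L.Formula (α ⊕ Fin 1) → L.Formula (Set.range w ⊕ Fin 1) := fun φ =>
    φ.relabel (Sum.map (Set.rangeFactorization w) id)
  have realize_toRange (φ : L.Formula (α ⊕ Fin 1)) (b : M) :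
      (toRange φ).Realize (Sum.elim (fun s => (s : M)) fun _ => b) ↔
        φ.Realize (Sum.elim w fun _ => b) := by
    rw [Formula.realize_relabel, Sum.elim_comp_map]
    rfl
  obtain ⟨b, hb⟩ := hsat (Set.range w) hcard (toRange '' p) fun p₀ hp₀ => by
    obtain ⟨q, hq, rfl⟩ := Finset.subset_set_image_iff.1 hp₀
    obtain ⟨b, hb⟩ := hp q hq
    exact ⟨b, Finset.forall_mem_image.2 fun φ hφ => (realize_toRange φ b).2 (hb φ hφ)⟩
  exact ⟨b, fun φ hφ => (realize_toRange φ b).1 (hb _ (Set.mem_image_of_mem _ hφ))⟩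

theorem exists_sameType_sumElim (hsat : IsSaturatedStructure L M) {N : Type*} [L.Structure N]
    {α : Type*} {v : α → N} {w : α → M} (hvw : SameType L v w)
    (hcard : Cardinal.mk (Set.range w) < Cardinal.mk M) (c : N) :
    ∃ b : M, SameType L (Sum.elim v fun _ : Fin 1 => c) (Sum.elim w fun _ => b) := by
  obtain ⟨b, hb⟩ := hsat.exists_realize_of_family hcard
    {φ | φ.Realize (Sum.elim v fun _ => c)} fun q hq => by
      have : ((Formula.iInf fun φ : q => φ.1).iExs (Fin 1)).Realize v :=
        Formula.realize_iExs.2 ⟨fun _ => c, Formula.realize_iInf.2 fun φ => hq φ.2⟩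
      obtain ⟨b, hb⟩ := Formula.realize_iExs.1 ((hvw _).1 this)
      refine ⟨b 0, fun φ hφ => ?_⟩
      rw [show (fun _ => b 0) = b from funext fun k => congrArg b (Subsingleton.elim 0 k)]
      exact Formula.realize_iInf.1 hb ⟨φ, hφ⟩
  exact ⟨b, SameType.of_imp hb⟩

theorem exists_sameType (hsat : IsSaturatedStructure L M) {N : Type*} [L.Structure N]
    (hNM : N ≅[L] M) {I : Type*} (hI : Nonempty (I ↪ M)) (v : I → N) :
    ∃ w : I → M, SameType L v w := by
  obtain ⟨_, _, hord⟩ := Cardinal.exists_ord_eq_type_lt I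
  have exists_next (i : I) (w : ∀ j, j < i → M) :
      ∃ b, SameType L (fun k : Set.Iio i => v k) (fun k : Set.Iio i => w k k.2) →
        SameType L (Sum.elim (fun k : Set.Iio i => v k) fun _ : Fin 1 => v i)
          (Sum.elim (fun k : Set.Iio i => w k k.2) fun _ => b) := by
    have hcard : Cardinal.mk (Set.range fun k : Set.Iio i => w k k.2) < Cardinal.mk M :=
      Cardinal.lift_lt.1 (Cardinal.mk_range_le_lift.trans_lt
        ((Cardinal.lift_lt.2 (Cardinal.mk_Iio_lt i hord)).trans_le (Cardinal.lift_mk_le'.2 hI)))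
    have : Nonempty M := Cardinal.mk_ne_zero_iff.1 (pos_of_gt hcard).ne'
    by_cases h : SameType L (fun k : Set.Iio i => v k) (fun k : Set.Iio i => w k k.2)
    · exact (hsat.exists_sameType_sumElim h hcard (v i)).imp fun b hb _ => hb
    · exact ⟨Classical.arbitrary M, fun h' => absurd h' h⟩
  choose next hnext using exists_next
  let w : I → M := wellFounded_lt.fix next
  have w_eq (i : I) : w i = next i fun j _ => w j := WellFounded.fix_eq _ _ _
  have sameType_Iic (i : I) :
      SameType L (fun k : Set.Iic i => v (k : I)) (fun k : Set.Iic i => w (k : I)) := by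
    induction i using WellFoundedLT.induction with
    | ind i ih =>
      have sameType_Iio : SameType L (fun k : Set.Iio i => v k) (fun k : Set.Iio i => w k) :=
        SameType.of_forall_Iic hNM fun k =>
          (ih k k.2).comp fun j : Set.Iic k => (⟨j, j.2⟩ : Set.Iic (k : I))
      have := hnext i (fun j _ => w j) sameType_Iio
      rw [← w_eq i] at this
      refine SameType.of_sumElim_Iio (v := v) (w := w) ?_
      rwa [Sum.comp_elim, Sum.comp_elim]
  exact ⟨w, SameType.of_forall_Iic hNM sameType_Iic⟩

theorem exists_realize (hsat : IsSaturatedStructure L M) {I Θ : Type*} (hI : Nonempty (I ↪ M))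
    (γ : Θ → L.Formula I)
    (hγ : ∀ s : Finset Θ, ∃ v : I → M, ∀ θ ∈ s, (γ θ).Realize v) :
    ∃ v : I → M, ∀ θ, (γ θ).Realize v := by
  classical
  choose V hV using hγ
  cases isEmpty_or_nonempty M
  · refine ⟨V ∅, fun θ => ?_⟩
    rw [Subsingleton.elim (V ∅) (V {θ})]
    exact hV {θ} θ (Finset.mem_singleton_self θ)
  -- The realizations `V s` of the finite subfamilies yield a realization of the whole family in an
  -- ultrapower of `M`, and saturation finds a tuple of the same complete type in `M`.
  let U : Ultrafilter (Finset Θ) := Ultrafilter.of Filter.atTop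
  have ultrapower_equiv : (U : Filter (Finset Θ)).Product (fun _ => M) ≅[L] M :=
    elementarilyEquivalent_iff.2 fun φ =>
      (Ultraproduct.sentence_realize φ).trans Filter.eventually_const
  obtain ⟨v, hv⟩ := hsat.exists_sameType ultrapower_equiv hI
    fun i => (↑fun s => V s i : (U : Filter (Finset Θ)).Product fun _ => M)
  refine ⟨v, fun θ => (hv (γ θ)).1 ((Ultraproduct.realize_formula_cast _ _).2 ?_)⟩
  have : ∀ᶠ s : Finset Θ in Filter.atTop, (γ θ).Realize (V s) :=
    (Filter.eventually_ge_atTop {θ}).mono fun s hs => hV s θ (hs (Finset.mem_singleton_self θ))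
  exact this.filter_mono (Ultrafilter.of_le _)

end IsSaturatedStructure

end Saturation

section QfReducts

variable {L L' : FirstOrder.Language} {M : Type*} [L.Structure M] [L'.Structure M]

/-- The `L`-structure on `M` is a quantifier-free reduct of the `L'`-structure on `M`. -/
def IsQfReduct (L L' : FirstOrder.Language) (M : Type*) [L.Structure M] [L'.Structure M] : Prop :=
  ∀ (n : ℕ) (x y : Fin n → M), SameQfType L' M x y → SameQfType L M x y

/-- Every quantifier-free type realized in `M` is equivalent in `M` to a single formula, which may
contain quantifiers. -/
def QfTypesDefinable (L : FirstOrder.Language) (M : Type*) [L.Structure M] : Prop :=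
  ∀ (n : ℕ) (b : Fin n → M), ∃ φ : L.Formula (Fin n),
    ∀ c : Fin n → M, φ.Realize c ↔ SameQfType L M c b

/-- Equality of quantifier-free types as a setoid on `n`-tuples, whose quotient is the set of
quantifier-free `n`-types realized in `M`. -/
def qfTypeSetoid (L : FirstOrder.Language) (M : Type*) [L.Structure M] (n : ℕ) :
    Setoid (Fin n → M) where
  r := SameQfType L M
  iseqv := ⟨SameQfType.refl, SameQfType.symm, SameQfType.trans⟩

theorem QfTypesDefinable.exists_formula_realize_iff_mk_eq (hdef : QfTypesDefinable L M) {n : ℕ}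
    (q : Quotient (qfTypeSetoid L M n)) :
    ∃ φ : L.Formula (Fin n), ∀ c : Fin n → M, φ.Realize c ↔ Quotient.mk _ c = q := by
  obtain ⟨b, rfl⟩ := q.exists_rep
  obtain ⟨φ, hφ⟩ := hdef n b
  exact ⟨φ, fun c => (hφ c).trans (Quotient.eq (r := qfTypeSetoid L M n)).symm⟩

theorem IsSaturatedStructure.finite_quotient_qfTypeSetoid (hsat : IsSaturatedStructure L M)
    (hdef : QfTypesDefinable L M) (n : ℕ) : Finite (Quotient (qfTypeSetoid L M n)) := by
  cases finite_or_infinite M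
  · infer_instance
  by_contra hinf
  rw [not_finite_iff_infinite] at hinf
  choose φ hφ using hdef.exists_formula_realize_iff_mk_eq (n := n)
  obtain ⟨v, hv⟩ := hsat.exists_realize ⟨Fin.valEmbedding.trans (Infinite.natEmbedding M)⟩
    (fun q => (φ q).not) fun s => by
      obtain ⟨q, hq⟩ := Infinite.exists_notMem_finset s
      refine ⟨q.out, fun q' hq' => ?_⟩
      rw [Formula.realize_not, hφ, Quotient.out_eq]
      exact fun h => hq (h ▸ hq')
  exact Formula.realize_not.1 (hv (Quotient.mk _ v)) ((hφ _ v).2 rfl)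

/-- Whether `Q g` holds depends only on the quantifier-free types of the tuples that `g` takes on
some finite set. If there are finitely many such types, all definable, then `Q` is expressed by a
formula whose variables are indexed by `I`. -/
def IsQfLocal (L : FirstOrder.Language) {M : Type*} [L.Structure M] {I : Type*}
    (Q : (I → M) → Prop) : Prop :=
  ∃ B : Set I, B.Finite ∧ ∀ g g' : I → M,
    (∀ (n : ℕ) (x : Fin n → I), (∀ i, x i ∈ B) → SameQfType L M (g ∘ x) (g' ∘ x)) → Q g → Q g'

theorem IsQfLocal.exists_formula_realize_iff (hdef : QfTypesDefinable L M)
    (hfin : ∀ n, Finite (Quotient (qfTypeSetoid L M n))) {I : Type*} {Q : (I → M) → Prop}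
    (hQ : IsQfLocal L Q) : ∃ ψ : L.Formula I, ∀ g : I → M, ψ.Realize g ↔ Q g := by
  obtain ⟨B, hB, hlocal⟩ := hQ
  obtain ⟨n, x, -, rfl⟩ := hB.fin_param
  have := hfin n
  choose φ hφ using hdef.exists_formula_realize_iff_mk_eq (n := n)
  let T : Set (Quotient (qfTypeSetoid L M n)) :=
    (fun g : I → M => Quotient.mk _ (g ∘ x)) '' {g | Q g}
  refine ⟨Formula.iSup fun q : T => (φ q).relabel x, fun g => ?_⟩
  simp only [Formula.realize_iSup, Formula.realize_relabel, hφ]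
  constructor
  · rintro ⟨⟨_, g', hg', rfl⟩, hgg'⟩
    refine hlocal g' g (fun m y hy => ?_) hg'
    choose k hk using hy
    obtain rfl : x ∘ k = y := funext hk
    exact (Quotient.exact hgg').symm.comp k
  · exact fun hg => ⟨⟨_, g, hg, rfl⟩, rfl⟩

theorem IsSaturatedStructure.exists_forall_of_isQfLocal (hsat : IsSaturatedStructure L M)
    (hdef : QfTypesDefinable L M) {I Θ : Type*} (hI : Nonempty (I ↪ M)) [Preorder Θ] [Nonempty Θ]
    [IsDirectedOrder Θ] {Q : Θ → (I → M) → Prop} (hlocal : ∀ θ, IsQfLocal L (Q θ))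
    (hanti : Antitone Q) (hex : ∀ θ, ∃ g, Q θ g) : ∃ g, ∀ θ, Q θ g := by
  choose ψ hψ using fun θ => (hlocal θ).exists_formula_realize_iff hdef
    (hsat.finite_quotient_qfTypeSetoid hdef)
  simp only [← hψ]
  refine hsat.exists_realize hI ψ fun s => ?_
  obtain ⟨θ₀, hθ₀⟩ := s.exists_le
  obtain ⟨g, hg⟩ := hex θ₀
  exact ⟨g, fun θ hθ => (hψ θ g).2 (hanti (hθ₀ θ hθ) g hg)⟩

/-- The map `g` preserves quantifier-free `L`-types on `B`, and for each tuple in `P` it sends the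
realizations in `B` of the quantifier-free `L`-type of that tuple to tuples with a common
quantifier-free `L'`-type. For `B` and `P` the sets of all elements and all tuples, `(g, id)` is a
semi-retraction. -/
def QfHomogeneousOn (L L' : FirstOrder.Language) {M : Type*} [L.Structure M] [L'.Structure M]
    (B : Set M) (P : Set (Σ n, Fin n → M)) (g : M → M) : Prop :=
  QfPreservingOn L B g ∧ ∀ a ∈ P, ∀ x y : Fin a.1 → M, (∀ i, x i ∈ B) → (∀ i, y i ∈ B) →
    SameQfType L M x a.2 → SameQfType L M y a.2 → SameQfType L' M (g ∘ x) (g ∘ y)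

namespace QfHomogeneousOn

variable {B B' : Set M} {P P' : Set (Σ n, Fin n → M)} {g : M → M}

theorem mono (hg : QfHomogeneousOn L L' B P g) (hB : B' ⊆ B) (hP : P' ⊆ P) :
    QfHomogeneousOn L L' B' P' g :=
  ⟨hg.1.mono hB, fun a ha x y hx hy =>
    hg.2 a (hP ha) x y (fun i => hB (hx i)) fun i => hB (hy i)⟩

theorem isQfLocal (hred : IsQfReduct L L' M) (hB : B.Finite) :
    IsQfLocal L' (QfHomogeneousOn L L' B P) :=
  ⟨B, hB, fun _ _ hgg' ⟨hpres, hhom⟩ =>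
    ⟨fun n x hx => (hpres n x hx).trans (hred n _ _ (hgg' n x hx)),
      fun a ha x y hx hy hxa hya => (hgg' _ x hx).symm.trans
        ((hhom a ha x y hx hy hxa hya).trans (hgg' _ y hy))⟩⟩

theorem isSemiRetraction (hred : IsQfReduct L L' M)
    (hg : QfHomogeneousOn L L' Set.univ Set.univ g) : IsSemiRetraction L L' M M g id :=
  ⟨⟨Set.injOn_univ.1 hg.1.injOn, fun n x y hxy => hg.2 ⟨n, x⟩ (Set.mem_univ _) x y
      (fun _ => Set.mem_univ _) (fun _ => Set.mem_univ _) (SameQfType.refl x) hxy.symm⟩,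
    ⟨Function.injective_id, hred⟩, fun n x => hg.1 n x fun _ => Set.mem_univ _⟩

end QfHomogeneousOn

theorem exists_qfHomogeneousOn_univ (hsat : IsSaturatedStructure L' M)
    (hred : IsQfReduct L L' M) (hdef : QfTypesDefinable L' M) {P : Set (Σ n, Fin n → M)}
    (hP : ∀ B : Set M, B.Finite → ∀ P₀ ⊆ P, P₀.Finite → ∃ g, QfHomogeneousOn L L' B P₀ g) :
    ∃ g, QfHomogeneousOn L L' Set.univ P g := by
  classical
  let Q : Finset M × Finset P → (M → M) → Prop := fun θ =>
    QfHomogeneousOn L L' (θ.1 : Set M) (Subtype.val '' (θ.2 : Set P))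
  have antitone_Q : Antitone Q := fun θ θ' hθ g hg =>
    hg.mono (Finset.coe_subset.2 hθ.1) (Set.image_mono (Finset.coe_subset.2 hθ.2))
  obtain ⟨g, hg⟩ := hsat.exists_forall_of_isQfLocal hdef ⟨Function.Embedding.refl M⟩
    (fun θ => QfHomogeneousOn.isQfLocal hred θ.1.finite_toSet) antitone_Q
    fun θ => hP _ θ.1.finite_toSet _ (Subtype.coe_image_subset P _) (θ.2.finite_toSet.image _)
  refine ⟨g, fun n x _ => ?_, fun a ha x y _ _ => ?_⟩
  · exact (hg (Finset.univ.image x, ∅)).1 n x (by simp)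
  · exact (hg (Finset.univ.image x ∪ Finset.univ.image y, {⟨a, ha⟩})).2 a (by simp) x y
      (by simp) (by simp)

theorem TupleRamsey.exists_qfHomogeneousOn_insert (hRP : TupleRamsey L M)
    {a : Σ n, Fin n → M} [Finite (Quotient (qfTypeSetoid L' M a.1))] {P : Set (Σ n, Fin n → M)}
    {g : M → M} (hg : QfHomogeneousOn L L' Set.univ P g) {B : Set M} (hB : B.Finite) :
    ∃ g', QfHomogeneousOn L L' B (insert a P) g' := by
  let color := Finite.equivFin (Quotient (qfTypeSetoid L' M a.1))
  obtain ⟨h, hpres, hhom⟩ := hRP a.1 a.2 B hB _ fun x => color (Quotient.mk _ (g ∘ x))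
  refine ⟨g ∘ h, hg.1.comp hpres (Set.mapsTo_univ _ _), ?_⟩
  rintro b (rfl | hb) x y hxB hyB hxb hyb
  · exact Quotient.exact (color.injective (hhom x y hxB hyB hxb hyb))
  · exact hg.2 b hb _ _ (fun _ => Set.mem_univ _) (fun _ => Set.mem_univ _)
      ((hpres _ x hxB).symm.trans hxb) ((hpres _ y hyB).symm.trans hyb)

theorem TupleRamsey.exists_qfHomogeneousOn_univ_univ (hRP : TupleRamsey L M)
    (hsat : IsSaturatedStructure L' M) (hred : IsQfReduct L L' M)
    (hdef : QfTypesDefinable L' M) :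
    ∃ g : M → M, QfHomogeneousOn L L' Set.univ Set.univ g := by
  have exists_of_finite (P : Set (Σ n, Fin n → M)) (hP : P.Finite) :
      ∃ g, QfHomogeneousOn L L' Set.univ P g := by
    induction P, hP using Set.Finite.induction_on with
    | empty => exact ⟨id, fun n x _ => SameQfType.refl x, fun a ha => ha.elim⟩
    | @insert a P _ _ ih =>
      obtain ⟨g, hg⟩ := ih
      have := hsat.finite_quotient_qfTypeSetoid hdef a.1
      refine exists_qfHomogeneousOn_univ hsat hred hdef fun B hB P₀ hP₀ _ => ?_
      exact (hRP.exists_qfHomogeneousOn_insert hg hB).imp fun g' hg' => hg'.mono subset_rfl hP₀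
  exact exists_qfHomogeneousOn_univ hsat hred hdef fun B _ P₀ _ hP₀ =>
    (exists_of_finite P₀ hP₀).imp fun g hg => hg.mono (Set.subset_univ B) subset_rfl

theorem semiRetract_iff_RP_of_qf_reduct_general
    (hlfA : StructLocallyFinite L M) (hlfB : StructLocallyFinite L' M)
    (hrigA : ∀ A : L.Substructure M, (A : Set M).Finite → IsRigidStructure L A)
    (hrigB : ∀ A : L'.Substructure M, (A : Set M).Finite → IsRigidStructure L' A)
    (hred : IsQfReduct L L' M) (hsat : IsSaturatedStructure L' M)
    (hdef : QfTypesDefinable L' M) (hRPB : RamseyProperty L' M) :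
    (∃ g f : M → M, IsSemiRetraction L L' M M g f) ↔ RamseyProperty L M := by
  constructor
  · rintro ⟨g, f, hgf⟩
    exact (TupleRamsey.of_isSemiRetraction hgf (hRPB.tupleRamsey hlfB hrigB)).ramseyProperty
  · intro hRPA
    obtain ⟨g, hg⟩ :=
      (hRPA.tupleRamsey hlfA hrigA).exists_qfHomogeneousOn_univ_univ hsat hred hdef
    exact ⟨g, id, hg.isSemiRetraction hred⟩

end QfReducts

/-- Theorem 3.6 / `iff`: let `𝒜` and `ℬ` be locally finite ordered structures
on the same underlying set such that `𝒜` is a quantifier-free reduct of `ℬ`, `ℬ` is saturated,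
every quantifier-free type realized in `ℬ` is equivalent in `ℬ` to a single formula, and `ℬ`
has the Ramsey property.  Then `𝒜` is a semi-retract of `ℬ` if and only if `𝒜` has the Ramsey
property. -/
theorem semiRetract_iff_RP_of_qf_reduct
    {L L' : FirstOrder.Language} {M : Type*} [L.Structure M] [L'.Structure M]
    (hlfA : StructLocallyFinite L M) (hlfB : StructLocallyFinite L' M)
    (hordA : ∃ R : L.Relations 2, IsLinearOrder M fun x y => Structure.RelMap R ![x, y])
    (hordB : ∃ R : L'.Relations 2, IsLinearOrder M fun x y => Structure.RelMap R ![x, y])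
    -- (i) `𝒜` is a quantifier-free reduct of `ℬ`
    (hreduct : ∀ (n : ℕ) (x y : Fin n → M), SameQfType L' M x y → SameQfType L M x y)
    -- (ii) `ℬ` is saturated
    (hsat : ∀ S : Set M, Cardinal.mk S < Cardinal.mk M →
      ∀ p : Set (L'.Formula (S ⊕ Fin 1)),
        (∀ p₀ : Finset (L'.Formula (S ⊕ Fin 1)), ↑p₀ ⊆ p →
          ∃ b : M, ∀ φ ∈ p₀, Formula.Realize φ (Sum.elim (fun s => (s : M)) fun _ => b)) →
        ∃ b : M, ∀ φ ∈ p, Formula.Realize φ (Sum.elim (fun s => (s : M)) fun _ => b))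
    -- (iii) every quantifier-free type realized in `ℬ` is equivalent in `ℬ` to a formula
    (hqe : ∀ (n : ℕ) (b : Fin n → M), ∃ φ : L'.Formula (Fin n),
      ∀ c : Fin n → M, Formula.Realize φ c ↔ SameQfType L' M c b)
    -- (iv) `ℬ` has the Ramsey property
    (hRPB : ∀ A₀ B₀ : L'.Substructure M, (A₀ : Set M).Finite → (B₀ : Set M).Finite →
      ∀ r : ℕ, 2 ≤ r → ArrowSub L' M A₀ B₀ r 1) :
    (∃ g f : M → M, IsSemiRetraction L L' M M g f) ↔
      ∀ A B : L.Substructure M, (A : Set M).Finite → (B : Set M).Finite → ∀ r : ℕ, 2 ≤ r →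
        ArrowSub L M A B r 1 :=
  semiRetract_iff_RP_of_qf_reduct_general hlfA hlfB
    (isRigidStructure_substructure_of_isLinearOrder hordA)
    (isRigidStructure_substructure_of_isLinearOrder hordB) hreduct hsat hqe hRPB
end

section
/- Fix an integer n ≥ 2. Let B be a countable atomless Boolean algebra, regarded as a structure in the language L_BA having binary function symbols for join and meet, a unary function symbol for complement, and constant symbols for 0 and 1. Let H be a countable structure in the language with a single n-ary relation symbol E such that: E holds only on n-tuples of pairwise distinct elements; E is invariant under all permutations of its arguments; and H has the hypergraph extension property: for every finite set X of elements of H and every collection S of (n−1)-element subsets of X there is an element v ∉ X such that for every (n−1)-element subset s of X, E holds of v together with (any enumeration of) s if and only if s ∈ S (so H is the countable random n-regular hypergraph). Then H is a semi-retract of B: there exist qftp-respecting injections g : H → B and f : B → H such that f ∘ g is an embedding of H into H in the hypergraph language. -/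
/-!
A vertex `h` of a hypergraph gives the family of all independent sets through `h`; finitely many
such families have empty intersection exactly when their vertices contain an edge. So in the power
set of the set of independent sets, `H` is coded by which meets vanish, and the vanishing of
minterms at a tuple depends only on the quantifier-free type of the tuple in `H`. A countable
family in any nontrivial Boolean algebra has a copy in an atomless one with the same vanishing
minterms; minterms determine quantifier-free types, and this gives `g`. Conversely, injective
`n`-tuples with meet `⊥` are the edges of a hypergraph on `B`, which embeds into `H` by the
extension property; this gives `f`.
-/

open FirstOrder FirstOrder.Language

/-- Function symbols of the language of Boolean algebras: constants `0`, `1`, unary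
complementation, and binary join and meet. -/
inductive BAFunc : ℕ → Type
  | bot : BAFunc 0
  | top : BAFunc 0
  | compl : BAFunc 1
  | sup : BAFunc 2
  | inf : BAFunc 2

/-- The first-order language of Boolean algebras. -/
def LBA : FirstOrder.Language :=
  ⟨BAFunc, fun _ => Empty⟩

/-- The natural `LBA`-structure on a Boolean algebra. -/
def baStructure (B : Type*) [BooleanAlgebra B] : LBA.Structure B where
  funMap {n} f x :=
    match f, x with
    | .bot, _ => ⊥
    | .top, _ => ⊤
    | .compl, x => (x 0)ᶜ
    | .sup, x => x 0 ⊔ x 1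
    | .inf, x => x 0 ⊓ x 1
  RelMap {n} r _ := r.elim

/-- The relation symbols of the language with a single `n`-ary relation symbol. -/
inductive HypRel (n : ℕ) : ℕ → Type
  | e : HypRel n n

/-- The language with a single `n`-ary relation symbol. -/
def LHyp (n : ℕ) : FirstOrder.Language :=
  ⟨fun _ => Empty, HypRel n⟩

/-- The `LHyp n`-structure on `H` determined by an `n`-ary relation `E`. -/
def hypStructure (n : ℕ) (H : Type*) (E : (Fin n → H) → Prop) : (LHyp n).Structure H where
  funMap {m} f _ := f.elim
  RelMap {m} r x := match r with | .e => E x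

namespace RandomHypergraph

/-! ### Quantifier-free types -/

theorem sameQfType_iff {L : FirstOrder.Language} {M : Type*} [L.Structure M] {m : ℕ}
    {x y : Fin m → M} :
    SameQfType L M x y ↔
      (∀ t u : L.Term (Fin m), t.realize x = u.realize x ↔ t.realize y = u.realize y) ∧
        ∀ (l : ℕ) (R : L.Relations l) (ts : Fin l → L.Term (Fin m)),
          Structure.RelMap R (fun i => (ts i).realize x) ↔
            Structure.RelMap R (fun i => (ts i).realize y) := by
  refine ⟨fun h => ⟨fun t u => ?_, fun l R ts => ?_⟩, fun ⟨heq, hrel⟩ φ hφ => ?_⟩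
  · simpa only [Formula.realize_equal] using
      h (t.equal u) (BoundedFormula.IsAtomic.equal _ _).isQF
  · simpa only [Formula.realize_rel] using
      h (R.formula ts) (BoundedFormula.IsAtomic.rel _ _).isQF
  · have realize_elim (z : Fin m → M) (t : L.Term (Fin m ⊕ Fin 0)) :
        t.realize (Sum.elim z default) = (t.relabel (Sum.elim id finZeroElim)).realize z := by
      rw [Term.realize_relabel, Sum.comp_elim, Function.comp_id,
        Subsingleton.elim default (z ∘ finZeroElim)]
    unfold Formula.Realize
    induction hφ with
    | falsum => exact Iff.rfl
    | of_isAtomic h =>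
      cases h with
      | equal t u => simpa only [BoundedFormula.realize_bdEqual, realize_elim] using heq _ _
      | rel R ts => simpa only [BoundedFormula.realize_rel, realize_elim] using hrel _ R _
    | imp _ _ ih₁ ih₂ => exact imp_congr ih₁ ih₂

theorem sameQfType_hyp_iff {n : ℕ} {H : Type*} {E : (Fin n → H) → Prop} {m : ℕ}
    {x y : Fin m → H} :
    @SameQfType (LHyp n) H (hypStructure n H E) m x y ↔
      (∀ i j, x i = x j ↔ y i = y j) ∧ ∀ σ : Fin n → Fin m, E (x ∘ σ) ↔ E (y ∘ σ) := by
  let := hypStructure n H E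
  rw [sameQfType_iff]
  refine ⟨fun ⟨heq, hrel⟩ => ⟨fun i j => heq (Term.var i) (Term.var j),
    fun σ => hrel n HypRel.e fun i => Term.var (σ i)⟩, fun ⟨heq, hrel⟩ => ?_⟩
  have exists_eq_var : ∀ t : (LHyp n).Term (Fin m), ∃ i, t = Term.var i := by
    rintro (i | ⟨f, _⟩)
    · exact ⟨i, rfl⟩
    · exact f.elim
  refine ⟨fun t u => ?_, fun l R ts => ?_⟩
  · obtain ⟨i, rfl⟩ := exists_eq_var t
    obtain ⟨j, rfl⟩ := exists_eq_var u
    exact heq i j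
  · choose σ hσ using fun i => exists_eq_var (ts i)
    obtain rfl : ts = fun i => Term.var (σ i) := funext hσ
    cases R
    exact hrel σ

/-! ### Minterms -/

section Minterm

variable {A C ι κ : Type*} [BooleanAlgebra A] [BooleanAlgebra C]

/-- The literal `b` or `bᶜ`, according to a sign `p`. -/
def literal (p : Bool) (b : A) : A := bif p then b else bᶜ

/-- The minterm of the family `a` on the finite index set `s` with signs `ε`: the meet of the
literals of sign `ε i` at `a i`. Values of `ε` outside `s` are irrelevant. -/
def minterm (a : ι → A) (s : Finset ι) (ε : ι → Bool) : A := s.inf fun i => literal (ε i) (a i)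

/-- The same minterms on `s` vanish for the families `a` and `c`, which may lie in different
Boolean algebras. For finite tuples this says that they have the same quantifier-free type. -/
def SameMintermsOn (s : Finset ι) (a : ι → A) (c : ι → C) : Prop :=
  ∀ ε, minterm a s ε = ⊥ ↔ minterm c s ε = ⊥

theorem disjoint_literal {p q : Bool} (h : p ≠ q) (b : A) :
    Disjoint (literal p b) (literal q b) := by
  cases p <;> cases q <;> simp_all [literal, disjoint_compl_left, disjoint_compl_right]

theorem inf_literal_congr {x u v : A} (h : x ⊓ u = x ⊓ v) (p : Bool) :
    x ⊓ literal p u = x ⊓ literal p v := by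
  cases p
  · simp only [literal, cond_false, ← sdiff_eq]
    rw [← sdiff_inf_self_left, h, sdiff_inf_self_left]
  · exact h

theorem minterm_le {a : ι → A} {s : Finset ι} {i : ι} (hi : i ∈ s) (ε : ι → Bool) :
    minterm a s ε ≤ literal (ε i) (a i) :=
  Finset.inf_le hi

theorem minterm_insert [DecidableEq ι] (a : ι → A) (s : Finset ι) (i : ι) (ε : ι → Bool) :
    minterm a (insert i s) ε = literal (ε i) (a i) ⊓ minterm a s ε :=
  Finset.inf_insert

theorem minterm_congr {a a' : ι → A} {s : Finset ι} {ε ε' : ι → Bool}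
    (ha : ∀ i ∈ s, a i = a' i) (hε : ∀ i ∈ s, ε i = ε' i) : minterm a s ε = minterm a' s ε' :=
  Finset.inf_congr rfl fun i hi => by rw [ha i hi, hε i hi]

theorem minterm_insert_update [DecidableEq ι] (a : ι → A) {s : Finset ι} {i : ι} (hi : i ∉ s)
    (ε : ι → Bool) (p : Bool) :
    minterm a (insert i s) (Function.update ε i p) = literal p (a i) ⊓ minterm a s ε := by
  rw [minterm_insert, Function.update_self, minterm_congr (fun _ _ => rfl) fun j hj =>
    Function.update_of_ne (ne_of_mem_of_not_mem hj hi) _ _]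

theorem le_of_forall_minterm_inf_le {x y : A} (a : ι → A) (s : Finset ι)
    (h : ∀ ε, minterm a s ε ⊓ x ≤ y) : x ≤ y := by
  classical
  induction s using Finset.induction_on with
  | empty => simpa only [minterm, Finset.inf_empty, top_inf_eq] using h fun _ => true
  | insert i s hi ih =>
    refine ih fun ε => ?_
    have hliteral (p : Bool) : minterm a s ε ⊓ x ⊓ literal p (a i) ≤ y := by
      rw [inf_comm, ← inf_assoc, ← minterm_insert_update a hi]
      exact h _
    rw [← sup_inf_inf_compl (x := minterm a s ε ⊓ x) (y := a i)]
    exact sup_le (hliteral true) (hliteral false)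

theorem exists_minterm_inf_ne_bot {x : A} (hx : x ≠ ⊥) (a : ι → A) (s : Finset ι) :
    ∃ ε, minterm a s ε ⊓ x ≠ ⊥ := by
  by_contra! h
  exact hx (le_bot_iff.1 (le_of_forall_minterm_inf_le a s fun ε => (h ε).le))

theorem sign_eq_of_minterm_inf_ne_bot {a : ι → A} {s : Finset ι} {t : Finset κ} {x : κ → ι}
    {ε : κ → Bool} {δ : ι → Bool} (h : minterm a s δ ⊓ minterm (a ∘ x) t ε ≠ ⊥) {j : κ}
    (hj : j ∈ t) (hxj : x j ∈ s) : ε j = δ (x j) := by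
  by_contra hne
  exact h (((disjoint_literal (Ne.symm hne) (a (x j))).mono
    (minterm_le hxj δ) (minterm_le hj ε)).eq_bot)

theorem SameMintermsOn.symm {s : Finset ι} {a : ι → A} {c : ι → C} (h : SameMintermsOn s a c) :
    SameMintermsOn s c a :=
  fun ε => (h ε).symm

theorem SameMintermsOn.trans {D : Type*} [BooleanAlgebra D] {s : Finset ι} {a : ι → A}
    {c : ι → C} {d : ι → D} (h : SameMintermsOn s a c) (h' : SameMintermsOn s c d) :
    SameMintermsOn s a d :=
  fun ε => (h ε).trans (h' ε)

theorem SameMintermsOn.minterm_comp_ne_bot {s : Finset ι} {a : ι → A} {c : ι → C}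
    (h : SameMintermsOn s a c) {t : Finset κ} {x : κ → ι} (hx : ∀ j ∈ t, x j ∈ s) {ε : κ → Bool}
    (ha : minterm (a ∘ x) t ε ≠ ⊥) : minterm (c ∘ x) t ε ≠ ⊥ := by
  obtain ⟨δ, hδ⟩ := exists_minterm_inf_ne_bot ha a s
  have hcδ : minterm c s δ ≠ ⊥ := mt (h δ).2 (ne_bot_of_le_ne_bot hδ inf_le_left)
  refine ne_bot_of_le_ne_bot hcδ (Finset.le_inf fun j hj => ?_)
  rw [sign_eq_of_minterm_inf_ne_bot hδ hj (hx j hj)]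
  exact minterm_le (hx j hj) δ

theorem SameMintermsOn.comp {s : Finset ι} {a : ι → A} {c : ι → C} (h : SameMintermsOn s a c)
    {t : Finset κ} {x : κ → ι} (hx : ∀ j ∈ t, x j ∈ s) : SameMintermsOn t (a ∘ x) (c ∘ x) :=
  fun _ => not_iff_not.1 ⟨h.minterm_comp_ne_bot hx, h.symm.minterm_comp_ne_bot hx⟩

theorem sameMintermsOn_comp_of_forall {a : ι → A} {c : ι → C} (h : ∀ s, SameMintermsOn s a c)
    (t : Finset κ) (x : κ → ι) : SameMintermsOn t (a ∘ x) (c ∘ x) := by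
  classical
  exact (h (t.image x)).comp fun _ => Finset.mem_image_of_mem x

theorem SameMintermsOn.inf_eq_bot_iff {s : Finset ι} {a : ι → A} {c : ι → C}
    (h : SameMintermsOn s a c) : s.inf a = ⊥ ↔ s.inf c = ⊥ :=
  h fun _ => true

/-! ### Terms in the language of Boolean algebras -/

attribute [local instance] baStructure

theorem exists_term_realize_eq_minterm (s : Finset ι) (ε : ι → Bool) :
    ∃ t : LBA.Term ι, ∀ a : ι → A, t.realize a = minterm a s ε := by
  classical
  induction s using Finset.induction_on with
  | empty => exact ⟨Term.func (BAFunc.top : LBA.Functions 0) Fin.elim0, fun a => rfl⟩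
  | insert i s _ ih =>
    obtain ⟨t, ht⟩ := ih
    obtain ⟨l, hl⟩ : ∃ l : LBA.Term ι, ∀ a : ι → A, l.realize a = literal (ε i) (a i) := by
      cases ε i
      · exact ⟨Term.func (BAFunc.compl : LBA.Functions 1) fun _ => Term.var i, fun a => rfl⟩
      · exact ⟨Term.var i, fun a => rfl⟩
    refine ⟨Term.func (BAFunc.inf : LBA.Functions 2) ![l, t], fun a => ?_⟩
    rw [minterm_insert, ← hl, ← ht]
    rfl

variable [Fintype ι]

theorem minterm_inf_realize (a : ι → A) (ε : ι → Bool) (t : LBA.Term ι) :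
    minterm a Finset.univ ε ⊓ t.realize a =
      bif t.realize ε then minterm a Finset.univ ε else ⊥ := by
  induction t with
  | var i =>
    have hle := minterm_le (a := a) (Finset.mem_univ i) ε
    simp only [Term.realize_var]
    cases hi : ε i
    · rw [hi] at hle
      exact (disjoint_compl_left.mono_left hle).eq_bot
    · rw [hi] at hle
      exact inf_eq_left.2 hle
  | func f ts ih =>
    cases f with
    | bot => exact inf_bot_eq _
    | top => exact inf_top_eq _
    | compl =>
      change _ ⊓ ((ts 0).realize a)ᶜ = bif ((ts 0).realize ε)ᶜ then _ else _
      rw [← sdiff_eq, ← sdiff_inf_self_left, ih]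
      cases (ts 0).realize ε <;> simp
    | sup =>
      change _ ⊓ ((ts 0).realize a ⊔ (ts 1).realize a) =
        bif (ts 0).realize ε ⊔ (ts 1).realize ε then _ else _
      rw [inf_sup_left, ih, ih]
      cases (ts 0).realize ε <;> cases (ts 1).realize ε <;> simp
    | inf =>
      change _ ⊓ ((ts 0).realize a ⊓ (ts 1).realize a) =
        bif (ts 0).realize ε ⊓ (ts 1).realize ε then _ else _
      rw [inf_inf_distrib_left, ih, ih]
      cases (ts 0).realize ε <;> cases (ts 1).realize ε <;> simp

theorem realize_eq_realize_iff {a : ι → A} {t u : LBA.Term ι} :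
    t.realize a = u.realize a ↔
      ∀ ε, minterm a Finset.univ ε ≠ ⊥ → t.realize ε = u.realize ε := by
  constructor
  · intro htu ε hε
    have h := minterm_inf_realize a ε t
    rw [htu, minterm_inf_realize] at h
    cases ht : t.realize ε <;> cases hu : u.realize ε <;> simp_all
  · intro h
    have inf_eq_inf (ε : ι → Bool) :
        minterm a Finset.univ ε ⊓ t.realize a = minterm a Finset.univ ε ⊓ u.realize a := by
      by_cases hε : minterm a Finset.univ ε = ⊥
      · rw [hε, bot_inf_eq, bot_inf_eq]
      · rw [minterm_inf_realize, minterm_inf_realize, h ε hε]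
    exact le_antisymm
      (le_of_forall_minterm_inf_le a _ fun ε => (inf_eq_inf ε).trans_le inf_le_right)
      (le_of_forall_minterm_inf_le a _ fun ε => (inf_eq_inf ε).symm.trans_le inf_le_right)

theorem SameMintermsOn.realize_eq_iff {a : ι → A} {c : ι → C}
    (h : SameMintermsOn Finset.univ a c) (t u : LBA.Term ι) :
    t.realize a = u.realize a ↔ t.realize c = u.realize c := by
  rw [realize_eq_realize_iff, realize_eq_realize_iff]
  exact forall_congr' fun ε => imp_congr_left (h ε).not

theorem SameMintermsOn.apply_eq_iff {a : ι → A} {c : ι → C} (h : SameMintermsOn Finset.univ a c)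
    (i j : ι) : a i = a j ↔ c i = c j :=
  h.realize_eq_iff (Term.var i) (Term.var j)

theorem sameQfType_ba_iff {m : ℕ} {a b : Fin m → A} :
    SameQfType LBA A a b ↔ SameMintermsOn Finset.univ a b := by
  refine ⟨fun h ε => ?_, fun h => sameQfType_iff.2 ⟨h.realize_eq_iff, fun _ R => R.elim⟩⟩
  obtain ⟨t, ht⟩ := exists_term_realize_eq_minterm (A := A) Finset.univ ε
  rw [← ht, ← ht]
  exact (sameQfType_iff.1 h).1 t (Term.func (BAFunc.bot : LBA.Functions 0) Fin.elim0)

end Minterm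

/-! ### One-point extensions -/

section Extension

variable {A C ι : Type*} [BooleanAlgebra A] [BooleanAlgebra C]

/-- Finite partial functions are encoded as pairs of a domain `s` and a total function, of which
`Q s` sees only the values on `s`. -/
theorem exists_forall_finset_of_forall_exists_insert {α : Type*} [Countable ι] [DecidableEq ι]
    {Q : Finset ι → (ι → α) → Prop}
    (hcongr : ∀ s c c', (∀ i ∈ s, c i = c' i) → Q s c → Q s c')
    (hmono : ∀ s t c, s ⊆ t → Q t c → Q s c) (hempty : ∃ c, Q ∅ c)
    (hinsert : ∀ s c i, i ∉ s → Q s c → ∃ v, Q (insert i s) (Function.update c i v)) :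
    ∃ c, ∀ s, Q s c := by
  obtain ⟨c₀, hc₀⟩ := hempty
  rcases isEmpty_or_nonempty ι with _ | _
  · exact ⟨c₀, fun s => by rwa [Finset.eq_empty_of_isEmpty s]⟩
  obtain ⟨e, he⟩ := exists_surjective_nat ι
  have exists_next (p : {p : Finset ι × (ι → α) // Q p.1 p.2}) (i : ι) :
      ∃ q : {p : Finset ι × (ι → α) // Q p.1 p.2},
        insert i p.1.1 ⊆ q.1.1 ∧ ∀ j ∈ p.1.1, q.1.2 j = p.1.2 j := by
    by_cases hi : i ∈ p.1.1
    · exact ⟨p, Finset.insert_subset hi subset_rfl, fun _ _ => rfl⟩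
    · obtain ⟨v, hv⟩ := hinsert _ _ i hi p.2
      exact ⟨⟨(_, _), hv⟩, subset_rfl,
        fun j hj => Function.update_of_ne (ne_of_mem_of_not_mem hj hi) _ _⟩
  choose next insert_subset_next next_eq using exists_next
  let p (k : ℕ) : {p : Finset ι × (ι → α) // Q p.1 p.2} :=
    Nat.rec ⟨(∅, c₀), hc₀⟩ (fun k p => next p (e k)) k
  have hdom : Monotone fun k => (p k).1.1 := monotone_nat_of_le_succ fun k =>
    (Finset.subset_insert _ _).trans (insert_subset_next (p k) (e k))
  have hval {k l : ℕ} (hkl : k ≤ l) : ∀ i ∈ (p k).1.1, (p l).1.2 i = (p k).1.2 i := by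
    induction l, hkl using Nat.le_induction with
    | base => exact fun _ _ => rfl
    | succ l hkl ih => exact fun i hi => (next_eq _ _ i (hdom hkl hi)).trans (ih i hi)
  have exists_mem (i : ι) : ∃ k, i ∈ (p k).1.1 := by
    obtain ⟨k, rfl⟩ := he i
    exact ⟨k + 1, insert_subset_next _ _ (Finset.mem_insert_self _ _)⟩
  choose stage mem_stage using exists_mem
  refine ⟨fun i => (p (stage i)).1.2 i, fun s => ?_⟩
  have stage_le {i : ι} (hi : i ∈ s) : stage i ≤ s.sup stage := Finset.le_sup hi
  refine hcongr s _ _ (fun i hi => hval (stage_le hi) i (mem_stage i)) ?_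
  exact hmono s _ _ (fun i hi => hdom (stage_le hi) (mem_stage i)) (p (s.sup stage)).2

/-- A Boolean algebra (or any order with `⊥`) is atomless if every element above `⊥` has an
element strictly between `⊥` and itself. -/
def IsAtomless (C : Type*) [PartialOrder C] [OrderBot C] : Prop :=
  ∀ a : C, ⊥ < a → ∃ b : C, ⊥ < b ∧ b < a

theorem IsAtomless.exists_inf_literal_eq_bot_iff (hC : IsAtomless C) {x : A} {y : C}
    (hxy : x = ⊥ ↔ y = ⊥) (b : A) :
    ∃ v : C, ∀ p, x ⊓ literal p b = ⊥ ↔ y ⊓ literal p v = ⊥ := by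
  simp only [Bool.forall_bool, literal, cond_true, cond_false]
  by_cases hb : x ⊓ b = ⊥
  · have hle : x ≤ bᶜ := le_compl_iff_disjoint_right.2 (disjoint_iff.2 hb)
    exact ⟨⊥, by simpa only [inf_eq_left.2 hle, compl_bot, inf_top_eq], by simp [hb]⟩
  by_cases hb' : x ⊓ bᶜ = ⊥
  · have hle : x ≤ b := disjoint_compl_right_iff.1 (disjoint_iff.2 hb')
    exact ⟨⊤, by simp [hb'], by simpa only [inf_eq_left.2 hle, inf_top_eq]⟩
  have hx : x ≠ ⊥ := ne_bot_of_le_ne_bot hb inf_le_left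
  obtain ⟨v, hv, hvy⟩ := hC y (bot_lt_iff_ne_bot.2 (mt hxy.2 hx))
  have hv' : y ⊓ vᶜ ≠ ⊥ := fun h => hvy.not_ge (disjoint_compl_right_iff.1 (disjoint_iff.2 h))
  exact ⟨v, iff_of_false hb' hv', iff_of_false hb (by rw [inf_eq_right.2 hvy.le]; exact hv.ne')⟩

theorem exists_forall_literal_inf_literal_eq (b : A) (v : Bool → A) :
    ∃ w, ∀ q p, literal q b ⊓ literal p w = literal q b ⊓ literal p (v q) := by
  refine ⟨b ⊓ v true ⊔ bᶜ ⊓ v false, fun q p => inf_literal_congr ?_ p⟩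
  cases q <;> simp [literal, inf_sup_left, ← inf_assoc]

theorem IsAtomless.exists_minterm_inf_literal_eq_bot_iff (hC : IsAtomless C) {a : ι → A}
    {c : ι → C} (s : Finset ι) (b : A) {x : A} {y : C}
    (h : ∀ ε, x ⊓ minterm a s ε = ⊥ ↔ y ⊓ minterm c s ε = ⊥) :
    ∃ v : C, ∀ ε p,
      x ⊓ minterm a s ε ⊓ literal p b = ⊥ ↔ y ⊓ minterm c s ε ⊓ literal p v = ⊥ := by
  classical
  induction s using Finset.induction_on generalizing x y with
  | empty =>
    simp only [minterm, Finset.inf_empty, inf_top_eq] at h ⊢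
    obtain ⟨v, hv⟩ := hC.exists_inf_literal_eq_bot_iff (h fun _ => true) b
    exact ⟨v, fun _ => hv⟩
  | insert i s hi ih =>
    have exists_of_sign (q : Bool) : ∃ v : C, ∀ ε p,
        x ⊓ literal q (a i) ⊓ minterm a s ε ⊓ literal p b = ⊥ ↔
          y ⊓ literal q (c i) ⊓ minterm c s ε ⊓ literal p v = ⊥ := by
      refine ih fun ε => ?_
      rw [inf_assoc, inf_assoc, ← minterm_insert_update a hi, ← minterm_insert_update c hi]
      exact h _
    choose v hv using exists_of_sign
    obtain ⟨w, hw⟩ := exists_forall_literal_inf_literal_eq (c i) v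
    refine ⟨w, fun ε p => ?_⟩
    have hsign : literal (ε i) (c i) ⊓ minterm c s ε ⊓ literal p w =
        literal (ε i) (c i) ⊓ minterm c s ε ⊓ literal p (v (ε i)) := by
      rw [inf_right_comm, hw, inf_right_comm]
    rw [minterm_insert, minterm_insert, inf_assoc y, hsign]
    simpa only [inf_assoc] using hv (ε i) ε p

theorem IsAtomless.exists_sameMintermsOn_insert [DecidableEq ι] (hC : IsAtomless C) {a : ι → A}
    {c : ι → C} {s : Finset ι} (h : SameMintermsOn s a c) {i : ι} (hi : i ∉ s) :
    ∃ v, SameMintermsOn (insert i s) a (Function.update c i v) := by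
  obtain ⟨v, hv⟩ := hC.exists_minterm_inf_literal_eq_bot_iff s (a i) (x := ⊤) (y := ⊤)
    (fun ε => by rw [top_inf_eq, top_inf_eq, h ε])
  refine ⟨v, fun ε => ?_⟩
  have hcv : minterm (Function.update c i v) s ε = minterm c s ε :=
    minterm_congr (fun j hj => Function.update_of_ne (ne_of_mem_of_not_mem hj hi) _ _)
      fun _ _ => rfl
  rw [minterm_insert, minterm_insert, hcv, Function.update_self, inf_comm, inf_comm (literal _ v)]
  simpa only [top_inf_eq] using hv ε (ε i)

theorem IsAtomless.exists_forall_sameMintermsOn [Nontrivial A] [Nontrivial C] [Countable ι]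
    (hC : IsAtomless C) (a : ι → A) : ∃ c : ι → C, ∀ s, SameMintermsOn s a c := by
  classical
  refine exists_forall_finset_of_forall_exists_insert (Q := fun s c => SameMintermsOn s a c)
    (fun s c c' hcc' h ε => ?_) (fun s t c hst h => h.comp (x := id) hst)
    ⟨fun _ => ⊥, fun ε => ?_⟩ fun s c i hi h => hC.exists_sameMintermsOn_insert h hi
  · rw [h ε, minterm_congr hcc' fun _ _ => rfl]
  · simp [minterm]

end Extension

/-! ### Hypergraphs -/

section Hypergraph

variable {n : ℕ} {V W : Type*} {E : (Fin n → V) → Prop} {F : (Fin n → W) → Prop}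

/-- An `n`-regular hypergraph, as a symmetric `n`-ary relation that holds only on tuples of
pairwise distinct elements. -/
structure IsHypergraph (E : (Fin n → V) → Prop) : Prop where
  injective : ∀ x, E x → Function.Injective x
  comp_perm : ∀ (x : Fin n → V) (σ : Equiv.Perm (Fin n)), E (x ∘ σ) ↔ E x

/-- The hypergraph extension property: over every finite set `X` of vertices, each collection of
`(n - 1)`-element subsets is the link in `X` of some vertex outside `X`. -/
def HasExtensionProperty (E : (Fin n → V) → Prop) : Prop :=
  ∀ (X : Finset V) (S : Finset (Finset V)), (∀ s ∈ S, s ⊆ X ∧ s.card = n - 1) →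
    ∃ v ∉ X, ∀ s : Finset V, s ⊆ X → s.card = n - 1 →
      ∀ x : Fin n → V, Function.Injective x → Set.range x = insert v (s : Set V) → (E x ↔ s ∈ S)

theorem IsHypergraph.of_range_subset (hE : IsHypergraph E) {x y : Fin n → V} (hy : E y)
    (h : Set.range y ⊆ Set.range x) : E x := by
  choose σ hσ using fun i => h (Set.mem_range_self i)
  obtain rfl : x ∘ σ = y := funext hσ
  have hσ_inj : Function.Injective σ := (hE.injective _ hy).of_comp
  exact (hE.comp_perm x (Equiv.ofBijective σ (Finite.injective_iff_bijective.1 hσ_inj))).1 hy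

/-- `v` restricts to an embedding of the hypergraph `F` induced on `s` into the hypergraph `E`. -/
structure IsEmbeddingOn (F : (Fin n → W) → Prop) (E : (Fin n → V) → Prop) (s : Finset W)
    (v : W → V) : Prop where
  injOn : Set.InjOn v s
  map_iff : ∀ x : Fin n → W, (∀ j, x j ∈ s) → (E (v ∘ x) ↔ F x)

theorem IsEmbeddingOn.congr {s : Finset W} {v v' : W → V} (h : IsEmbeddingOn F E s v)
    (hvv' : ∀ i ∈ s, v i = v' i) : IsEmbeddingOn F E s v' where
  injOn := h.injOn.congr hvv'
  map_iff x hx := by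
    rw [← h.map_iff x hx, show v' ∘ x = v ∘ x from funext fun j => (hvv' _ (hx j)).symm]

theorem HasExtensionProperty.exists_notMem_image [DecidableEq V] (hext : HasExtensionProperty E)
    (hF : IsHypergraph F) {s : Finset W} {v : W → V} (hv : Set.InjOn v s) (i : W) :
    ∃ w ∉ s.image v, ∀ t ⊆ s, t.card = n - 1 → ∀ x : Fin n → V, Function.Injective x →
      Set.range x = insert w (v '' t) → ∀ y : Fin n → W, Set.range y = insert i (t : Set W) →
        (E x ↔ F y) := by
  classical
  let link : Finset (Finset W) :=
    {t ∈ s.powersetCard (n - 1) | ∃ y, F y ∧ Set.range y = insert i (t : Set W)}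
  have link_subset : link ⊆ s.powerset := fun t ht =>
    Finset.mem_powerset.2 (Finset.mem_powersetCard.1 (Finset.mem_filter.1 ht).1).1
  have card_image {t : Finset W} (hts : t ⊆ s) : (t.image v).card = t.card :=
    Finset.card_image_of_injOn (hv.mono hts)
  obtain ⟨w, hw, hwlink⟩ := hext (s.image v) (link.image (Finset.image v)) (by
    simp only [Finset.forall_mem_image, link, Finset.mem_filter, Finset.mem_powersetCard]
    rintro t ⟨⟨hts, ht⟩, -⟩
    exact ⟨Finset.image_subset_image hts, (card_image hts).trans ht⟩)
  refine ⟨w, hw, fun t hts ht x hx hxt y hyt => ?_⟩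
  have mem_link : t.image v ∈ link.image (Finset.image v) ↔ t ∈ link := by
    refine ⟨fun h => ?_, Finset.mem_image_of_mem _⟩
    obtain ⟨t', ht', htt'⟩ := Finset.mem_image.1 h
    rwa [← Finset.image_injOn_powerset_of_injOn hv (link_subset ht')
      (Finset.mem_powerset.2 hts) htt']
  rw [hwlink (t.image v) (Finset.image_subset_image hts) ((card_image hts).trans ht) x hx
    (by rwa [Finset.coe_image]), mem_link, Finset.mem_filter, Finset.mem_powersetCard,
    and_iff_right ⟨hts, ht⟩]
  exact ⟨fun ⟨z, hz, hzt⟩ => hF.of_range_subset hz (hzt.trans hyt.symm).subset,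
    fun hy => ⟨y, hy, hyt⟩⟩

theorem exists_isEmbeddingOn_insert [DecidableEq W] (hE : IsHypergraph E)
    (hext : HasExtensionProperty E) (hF : IsHypergraph F) {s : Finset W} {v : W → V}
    (h : IsEmbeddingOn F E s v) {i : W} (hi : i ∉ s) :
    ∃ w, IsEmbeddingOn F E (insert i s) (Function.update v i w) := by
  classical
  obtain ⟨w, hw, hwF⟩ := hext.exists_notMem_image hF h.injOn i
  let v' := Function.update v i w
  have hv'i : v' i = w := Function.update_self _ _ _
  have hv' : ∀ j ∈ s, v' j = v j := fun j hj =>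
    Function.update_of_ne (ne_of_mem_of_not_mem hj hi) _ _
  have hold : IsEmbeddingOn F E s v' := h.congr fun j hj => (hv' j hj).symm
  have image_eq {t : Finset W} (hts : t ⊆ s) : v' '' t = v '' t :=
    Set.image_congr fun j hj => hv' j (hts hj)
  have hinj : Set.InjOn v' (insert i s : Finset W) := by
    rw [Finset.coe_insert, Set.injOn_insert (mt Finset.mem_coe.1 hi), hv'i, image_eq subset_rfl,
      ← Finset.coe_image]
    exact ⟨hold.injOn, mt Finset.mem_coe.1 hw⟩
  refine ⟨w, hinj, fun x hx => ?_⟩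
  by_cases hxs : ∀ j, x j ∈ s
  · exact hold.map_iff x hxs
  by_cases hx_inj : Function.Injective x
  · let t := (Finset.univ.image x).erase i
    have hxi : i ∈ Finset.univ.image x := by
      obtain ⟨j, hj⟩ := not_forall.1 hxs
      rw [← (Finset.mem_insert.1 (hx j)).resolve_right hj]
      exact Finset.mem_image_of_mem x (Finset.mem_univ j)
    have hts : t ⊆ s := Finset.subset_insert_iff.1 (Finset.image_subset_iff.2 fun j _ => hx j)
    have ht : t.card = n - 1 := by
      rw [Finset.card_erase_of_mem hxi, Finset.card_image_of_injective _ hx_inj, Finset.card_fin]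
    have hxt : Set.range x = insert i (t : Set W) := by
      rw [← Finset.coe_insert, Finset.insert_erase hxi, Finset.coe_image, Finset.coe_univ,
        Set.image_univ]
    refine hwF t hts ht (v' ∘ x) (fun j k hjk => hx_inj (hinj (hx j) (hx k) hjk)) ?_ x hxt
    rw [Set.range_comp, hxt, Set.image_insert_eq, hv'i, image_eq hts]
  · exact iff_of_false (fun h => hx_inj (hE.injective _ h).of_comp)
      fun h => hx_inj (hF.injective _ h)

theorem exists_hypergraph_embedding [Countable W] [NeZero n] (hE : IsHypergraph E)
    (hext : HasExtensionProperty E) (hF : IsHypergraph F) :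
    ∃ v : W → V, Function.Injective v ∧ ∀ x, E (v ∘ x) ↔ F x := by
  classical
  obtain ⟨v₀, -⟩ := hext ∅ ∅ (by simp)
  obtain ⟨v, hv⟩ := exists_forall_finset_of_forall_exists_insert (Q := IsEmbeddingOn F E)
    (fun s c c' hcc' h => h.congr hcc')
    (fun s t c hst h => ⟨h.injOn.mono hst, fun x hx => h.map_iff x fun j => hst (hx j)⟩)
    ⟨fun _ => v₀, by simp, fun x hx => absurd (hx 0) (Finset.notMem_empty _)⟩
    fun s c i hi h => exists_isEmbeddingOn_insert hE hext hF h hi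
  refine ⟨v, fun i j hij => (hv {i, j}).injOn (by simp) (by simp) hij, fun x => ?_⟩
  exact (hv (Finset.univ.image x)).map_iff x fun j =>
    Finset.mem_image_of_mem x (Finset.mem_univ j)

end Hypergraph

/-! ### Coding a hypergraph in a Boolean algebra -/

section IndependentSets

variable {n : ℕ} {V κ : Type*} {E : (Fin n → V) → Prop}

/-- A set of vertices is independent if it contains no edge. -/
def IsIndependent (E : (Fin n → V) → Prop) (I : Set V) : Prop :=
  ∀ x, E x → ¬ Set.range x ⊆ I

/-- The star of a vertex: the family of all independent sets that contain it. -/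
def independentStar (E : (Fin n → V) → Prop) (h : V) : Set {I : Set V // IsIndependent E I} :=
  {I | h ∈ I.1}

theorem IsHypergraph.isIndependent_of_subsingleton [Nontrivial (Fin n)] (hE : IsHypergraph E)
    {I : Set V} (hI : I.Subsingleton) : IsIndependent E I := fun x hx hxI =>
  have ⟨i, j, hij⟩ := exists_pair_ne (Fin n)
  hij (hE.injective x hx (hI (hxI ⟨i, rfl⟩) (hxI ⟨j, rfl⟩)))

theorem IsHypergraph.independentStar_injective [Nontrivial (Fin n)] (hE : IsHypergraph E) :
    Function.Injective (independentStar E) := fun h h' heq => by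
  let singleton : {I : Set V // IsIndependent E I} :=
    ⟨{h}, hE.isIndependent_of_subsingleton Set.subsingleton_singleton⟩
  have hmem : singleton ∈ independentStar E h' := heq ▸ Set.mem_singleton h
  exact hmem.symm

theorem mem_minterm_iff {X : Type*} {a : κ → Set X} {s : Finset κ} {ε : κ → Bool} {p : X} :
    p ∈ minterm a s ε ↔ ∀ i ∈ s, (p ∈ a i ↔ ε i = true) := by
  simp only [minterm, Finset.inf_set_eq_iInter, Set.mem_iInter]
  refine forall₂_congr fun i _ => ?_
  cases ε i <;> simp [literal]

variable [Fintype κ]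

theorem minterm_independentStar_ne_bot {x y : κ → V} (heq : ∀ i j, y i = y j → x i = x j)
    (hedge : ∀ σ : Fin n → κ, E (y ∘ σ) → E (x ∘ σ)) {ε : κ → Bool}
    (hx : minterm (independentStar E ∘ x) Finset.univ ε ≠ ⊥) :
    minterm (independentStar E ∘ y) Finset.univ ε ≠ ⊥ := by
  obtain ⟨⟨I, hI⟩, hIx⟩ := Set.nonempty_iff_ne_empty.2 hx
  have mem_I (i : κ) : x i ∈ I ↔ ε i = true := mem_minterm_iff.1 hIx i (Finset.mem_univ i)
  let J : Set V := y '' {i | ε i = true}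
  have hJ : IsIndependent E J := fun z hz hzJ => by
    choose σ hσ hσz using fun i => hzJ (Set.mem_range_self i)
    obtain rfl : y ∘ σ = z := funext hσz
    exact hI _ (hedge σ hz) (Set.range_subset_iff.2 fun i => (mem_I _).2 (hσ i))
  refine Set.nonempty_iff_ne_empty.1 ⟨⟨J, hJ⟩, mem_minterm_iff.2 fun j _ => ?_⟩
  refine ⟨fun ⟨i, hi, hij⟩ => ?_, fun hj => ⟨j, hj, rfl⟩⟩
  rw [← mem_I, ← heq i j hij, mem_I]
  exact hi

theorem sameMintermsOn_independentStar {x y : κ → V} (heq : ∀ i j, x i = x j ↔ y i = y j)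
    (hedge : ∀ σ : Fin n → κ, E (x ∘ σ) ↔ E (y ∘ σ)) :
    SameMintermsOn Finset.univ (independentStar E ∘ x) (independentStar E ∘ y) := fun _ =>
  not_iff_not.1 ⟨minterm_independentStar_ne_bot (fun i j => (heq i j).2) fun σ => (hedge σ).2,
    minterm_independentStar_ne_bot (fun i j => (heq i j).1) fun σ => (hedge σ).1⟩

theorem IsHypergraph.inf_independentStar_eq_bot_iff (hE : IsHypergraph E) {x : Fin n → V} :
    Finset.univ.inf (independentStar E ∘ x) = ⊥ ↔ E x := by
  rw [Finset.inf_set_eq_iInter, Set.bot_eq_empty, Set.eq_empty_iff_forall_notMem]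
  simp only [Finset.mem_univ, Set.iInter_true, Set.mem_iInter]
  constructor
  · intro h
    by_contra hx
    refine h ⟨Set.range x, fun y hy hyx => hx (hE.of_range_subset hy hyx)⟩ fun i => ?_
    exact Set.mem_range_self i
  · exact fun hx I hI => I.2 x hx (Set.range_subset_iff.2 hI)

end IndependentSets

section Coding

variable {n : ℕ} {V B : Type*} [BooleanAlgebra B] {E : (Fin n → V) → Prop}

/-- The hypergraph on a Boolean algebra whose edges are the injective `n`-tuples with meet `⊥`. -/
def meetBotHypergraph (n : ℕ) (B : Type*) [BooleanAlgebra B] (b : Fin n → B) : Prop :=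
  Function.Injective b ∧ Finset.univ.inf b = ⊥

theorem isHypergraph_meetBotHypergraph (n : ℕ) (B : Type*) [BooleanAlgebra B] :
    IsHypergraph (meetBotHypergraph n B) where
  injective _ hb := hb.1
  comp_perm b σ := by
    have hinf : Finset.univ.inf (b ∘ σ) = Finset.univ.inf b := by
      rw [← Finset.inf_image, Finset.image_univ_equiv]
    rw [meetBotHypergraph, meetBotHypergraph, σ.injective_comp, hinf]

theorem qftpRespecting_of_sameMintermsOn_independentStar [Nontrivial (Fin n)]
    (hE : IsHypergraph E) {g : V → B} (hg : ∀ s, SameMintermsOn s (independentStar E) g) :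
    @QftpRespecting (LHyp n) LBA V B (hypStructure n V E) (baStructure B) g := by
  refine ⟨fun h h' hgh => hE.independentStar_injective ?_, fun m x y hxy => ?_⟩
  · exact ((sameMintermsOn_comp_of_forall hg _ ![h, h']).apply_eq_iff 0 1).2 hgh
  · obtain ⟨heq, hedge⟩ := sameQfType_hyp_iff.1 hxy
    exact sameQfType_ba_iff.2 ((sameMintermsOn_comp_of_forall hg _ x).symm.trans
      ((sameMintermsOn_independentStar heq hedge).trans (sameMintermsOn_comp_of_forall hg _ y)))

theorem qftpRespecting_of_iff_meetBotHypergraph {f : B → V} (hf : Function.Injective f)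
    (hfE : ∀ b, E (f ∘ b) ↔ meetBotHypergraph n B b) :
    @QftpRespecting LBA (LHyp n) B V (baStructure B) (hypStructure n V E) f := by
  refine ⟨hf, fun m x y hxy => sameQfType_hyp_iff.2 ?_⟩
  have hminterms := sameQfType_ba_iff.1 hxy
  refine ⟨fun i j => ?_, fun σ => ?_⟩
  · exact hf.eq_iff.trans ((hminterms.apply_eq_iff i j).trans hf.eq_iff.symm)
  · have hσ : SameMintermsOn Finset.univ (x ∘ σ) (y ∘ σ) :=
      hminterms.comp fun j _ => Finset.mem_univ (σ j)
    have hinj : Function.Injective (x ∘ σ) ↔ Function.Injective (y ∘ σ) :=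
      forall₂_congr fun i j => imp_congr_left (hσ.apply_eq_iff i j)
    exact (hfE _).trans ((and_congr hinj hσ.inf_eq_bot_iff).trans (hfE _).symm)

theorem IsHypergraph.meetBotHypergraph_comp_iff (hE : IsHypergraph E) {g : V → B}
    (hg_inj : Function.Injective g) (hg : ∀ s, SameMintermsOn s (independentStar E) g)
    {x : Fin n → V} : meetBotHypergraph n B (g ∘ x) ↔ E x := by
  rw [meetBotHypergraph, ← (sameMintermsOn_comp_of_forall hg _ x).inf_eq_bot_iff,
    hE.inf_independentStar_eq_bot_iff]
  exact and_iff_right_of_imp fun hx => hg_inj.comp (hE.injective x hx)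

end Coding

end RandomHypergraph

/-- Theorem 4.3: for every `n ≥ 2`, the countable random `n`-regular
hypergraph is a semi-retract of the countable atomless Boolean algebra. -/
theorem randomHypergraph_semiRetract_of_atomless_BA
    (n : ℕ) (hn : 2 ≤ n)
    (B : Type*) [BooleanAlgebra B] [Countable B] [Nontrivial B]
    (hatomless : ∀ a : B, ⊥ < a → ∃ b : B, ⊥ < b ∧ b < a)
    (H : Type*) [Countable H] (E : (Fin n → H) → Prop)
    -- `E` holds only on tuples of pairwise distinct elements
    (hinj : ∀ x : Fin n → H, E x → Function.Injective x)
    -- `E` is invariant under permutations of its arguments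
    (hperm : ∀ (x : Fin n → H) (σ : Equiv.Perm (Fin n)), E (x ∘ σ) ↔ E x)
    -- the hypergraph extension property
    (hext : ∀ (X : Finset H) (S : Finset (Finset H)), (∀ s ∈ S, s ⊆ X ∧ s.card = n - 1) →
      ∃ v ∉ X, ∀ s : Finset H, s ⊆ X → s.card = n - 1 →
        ∀ x : Fin n → H, Function.Injective x →
          Set.range x = insert v (s : Set H) → (E x ↔ s ∈ S)) :
    ∃ (g : H → B) (f : B → H),
      @IsSemiRetraction (LHyp n) LBA H B (hypStructure n H E) (baStructure B) g f := by
  have : NeZero n := ⟨by omega⟩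
  have : Nontrivial (Fin n) := Fin.nontrivial_iff_two_le.2 hn
  have hE : RandomHypergraph.IsHypergraph E := ⟨hinj, hperm⟩
  have : Nonempty {I : Set H // RandomHypergraph.IsIndependent E I} :=
    ⟨⟨∅, hE.isIndependent_of_subsingleton Set.subsingleton_empty⟩⟩
  obtain ⟨g, hg⟩ := RandomHypergraph.IsAtomless.exists_forall_sameMintermsOn hatomless
    (RandomHypergraph.independentStar E)
  obtain ⟨f, hf, hfE⟩ := RandomHypergraph.exists_hypergraph_embedding hE hext
    (RandomHypergraph.isHypergraph_meetBotHypergraph n B)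
  have hg_qftp := RandomHypergraph.qftpRespecting_of_sameMintermsOn_independentStar hE hg
  have hf_qftp := RandomHypergraph.qftpRespecting_of_iff_meetBotHypergraph hf hfE
  refine ⟨g, f, hg_qftp, hf_qftp, fun m x => RandomHypergraph.sameQfType_hyp_iff.2
    ⟨fun i j => (hf.comp hg_qftp.1).eq_iff.symm, fun σ => ?_⟩⟩
  exact ((hfE (g ∘ x ∘ σ)).trans (hE.meetBotHypergraph_comp_iff hg_qftp.1 hg)).symm
end
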